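/- Let A, B, C be nonempty pairwise disjoint sets forming a partition of M ⊆ V. Then the following conjunction holds if and only if X_A ⟂ X_B | X_C: the table 𝔛_M is strictly collapsible over A into 𝔛_{B∪C} with respect to λ_{B'}^M and λ_{B'∪C'}^M for every nonempty B' ⊆ B and nonempty C' ⊆ C, and strictly collapsible over B into 𝔛_{A∪C} with respect to λ_{A'}^M and λ_{A'∪C'}^M for every nonempty A' ⊆ A and nonempty C' ⊆ C. -/

import Mathlib

open Finset

variable {V : Type*} [Fintype V] [DecidableEq V]
variable {𝔛 : V → Type*} [∀ v, Fintype (𝔛 v)] [∀ v, DecidableEq (𝔛 v)]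
  [∀ v, Nonempty (𝔛 v)]

/-- The marginal `p_A` of a distribution `p` on the full table, evaluated at the
`A`-coordinates of `x`. -/
noncomputable def margin (p : (∀ v, 𝔛 v) → ℝ) (A : Finset V) (x : ∀ v, 𝔛 v) : ℝ :=
  ∑ y ∈ Finset.univ.filter (fun y : ∀ v, 𝔛 v => ∀ v ∈ A, y v = x v), p y

/-- `ν_L^M(x_L) = (1/|𝔛_{M∖L}|) Σ_{j ∈ 𝔛_M : j_L = x_L} log p_M(j)`, written with sums over
full configurations (for `L ⊆ M` the extra coordinates cancel against the normalization). -/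
noncomputable def nu (p : (∀ v, 𝔛 v) → ℝ) (L M : Finset V) (x : ∀ v, 𝔛 v) : ℝ :=
  (∏ v ∈ Lᶜ, (Fintype.card (𝔛 v) : ℝ))⁻¹ *
    ∑ j ∈ Finset.univ.filter (fun j : ∀ v, 𝔛 v => ∀ v ∈ L, j v = x v),
      Real.log (margin p M j)

/-- The marginal log-linear parameter `λ_L^M(x_L) = Σ_{L' ⊆ L} (−1)^{|L∖L'|} ν_{L'}^M(x_{L'})`. -/
noncomputable def mll (p : (∀ v, 𝔛 v) → ℝ) (L M : Finset V) (x : ∀ v, 𝔛 v) : ℝ :=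
  ∑ L' ∈ L.powerset, (-1 : ℝ) ^ ((L \ L').card) * nu p L' M x

/-- `X_A ⟂ X_B | X_C`: `p_{A∪B∪C}·p_C = p_{A∪C}·p_{B∪C}` pointwise. -/
def CondIndep (p : (∀ v, 𝔛 v) → ℝ) (A B C : Finset V) : Prop :=
  ∀ x : ∀ v, 𝔛 v,
    margin p (A ∪ B ∪ C) x * margin p C x = margin p (A ∪ C) x * margin p (B ∪ C) x

/-- `𝔛_N` is strictly collapsible over `N ∖ M'` into `𝔛_{M'}` with respect to `λ_L^N`:
`λ_L^{M'} = λ_L^N` and `λ_Z^N = 0` for every `Z ⊆ N` with `L ⊊ Z` meeting `N ∖ M'`. -/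
def StrictlyCollapsible (p : (∀ v, 𝔛 v) → ℝ) (N M' L : Finset V) : Prop :=
  (∀ x : ∀ v, 𝔛 v, mll p L M' x = mll p L N x) ∧
  (∀ Z ⊆ N, L ⊂ Z → (Z ∩ (N \ M')).Nonempty → ∀ x : ∀ v, 𝔛 v, mll p Z N x = 0)

/-- averaging operator -/
noncomputable def avgOp (f : (∀ v, 𝔛 v) → ℝ) (L : Finset V) (x : ∀ v, 𝔛 v) : ℝ :=
  (∏ v ∈ Lᶜ, (Fintype.card (𝔛 v) : ℝ))⁻¹ *
    ∑ j ∈ Finset.univ.filter (fun j : ∀ v, 𝔛 v => ∀ v ∈ L, j v = x v), f j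

noncomputable def lamOp (f : (∀ v, 𝔛 v) → ℝ) (L : Finset V) (x : ∀ v, 𝔛 v) : ℝ :=
  ∑ L' ∈ L.powerset, (-1 : ℝ) ^ ((L \ L').card) * avgOp f L' x

/-- `f` depends only on the coordinates in `K` -/
def DepOn (f : (∀ v, 𝔛 v) → ℝ) (K : Finset V) : Prop :=
  ∀ x y : ∀ v, 𝔛 v, (∀ v ∈ K, x v = y v) → f x = f y

theorem mll_eq (p : (∀ v, 𝔛 v) → ℝ) (L M : Finset V) (x : ∀ v, 𝔛 v) :
    mll p L M x = lamOp (fun j => Real.log (margin p M j)) L x := rfl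

theorem avgOp_insert (f : (∀ v, 𝔛 v) → ℝ) (K L : Finset V) (v : V) (hf : DepOn f K)
    (hvK : v ∉ K) (hvL : v ∉ L) (x : ∀ v, 𝔛 v) : avgOp f (insert v L) x = avgOp f L x := by
  unfold avgOp
  have h1 : Lᶜ = insert v (insert v L)ᶜ := by
    ext w; by_cases h : w = v <;> simp [h, hvL]
  have h2 : ∑ j ∈ Finset.univ.filter (fun j : ∀ v, 𝔛 v => ∀ v ∈ L, j v = x v), f j
      = (Fintype.card (𝔛 v) : ℝ) *
        ∑ j ∈ Finset.univ.filter (fun j : ∀ v, 𝔛 v => ∀ w ∈ insert v L, j w = x w), f j := by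
    rw [← Finset.sum_fiberwise _ (fun j : ∀ v, 𝔛 v => j v)]
    rw [Fintype.card, ← nsmul_eq_mul, ← Finset.sum_const]
    refine Finset.sum_congr rfl fun a _ => ?_
    refine Finset.sum_bij' (fun j _ => Function.update j v (x v))
      (fun j _ => Function.update j v a) ?_ ?_ ?_ ?_ ?_
    · intro j hj
      simp only [Finset.mem_filter, Finset.mem_univ, true_and, Finset.mem_insert] at hj ⊢
      intro w hw
      by_cases h : w = v
      · subst h; simp
      · rw [Function.update_of_ne h]; exact hj.1 w (hw.resolve_left h)
    · intro j hj
      simp only [Finset.mem_filter, Finset.mem_univ, true_and, Finset.mem_insert] at hj ⊢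
      refine ⟨fun w hw => ?_, by simp⟩
      have h : w ≠ v := fun h => hvL (h ▸ hw)
      rw [Function.update_of_ne h]; exact hj w (Or.inr hw)
    · intro j hj
      simp only [Finset.mem_filter, Finset.mem_univ, true_and] at hj
      rw [Function.update_idem, ← hj.2, Function.update_eq_self]
    · intro j hj
      simp only [Finset.mem_filter, Finset.mem_univ, true_and] at hj
      rw [Function.update_idem, ← hj v (Finset.mem_insert_self _ _), Function.update_eq_self]
    · intro j hj
      refine hf _ _ fun w hw => ?_
      have h : w ≠ v := fun h => hvK (h ▸ hw)
      rw [Function.update_of_ne h]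
  rw [h2, h1, Finset.prod_insert (by simp), mul_inv, compl_insert]
  have : (Fintype.card (𝔛 v) : ℝ) ≠ 0 := by
    exact_mod_cast Fintype.card_ne_zero
  field_simp

theorem lamOp_eq_zero (f : (∀ v, 𝔛 v) → ℝ) (K L : Finset V) (hf : DepOn f K)
    (h : ¬ L ⊆ K) (x : ∀ v, 𝔛 v) : lamOp f L x = 0 := by
  obtain ⟨v, hvL, hvK⟩ := Finset.not_subset.1 h
  unfold lamOp
  obtain ⟨L0, hv0, rfl⟩ : ∃ L0, v ∉ L0 ∧ L = insert v L0 :=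
    ⟨L.erase v, by simp, (Finset.insert_erase hvL).symm⟩
  rw [Finset.sum_powerset_insert hv0, ← Finset.sum_add_distrib]
  refine Finset.sum_eq_zero fun L' hL' => ?_
  have hv' : v ∉ L' := fun h => hv0 (Finset.mem_powerset.1 hL' h)
  rw [avgOp_insert f K L' v hf hvK hv', Finset.insert_sdiff_of_notMem _ hv',
    Finset.card_insert_of_notMem (by simp [hv0])]
  have : insert v L0 \ insert v L' = L0 \ L' := by
    ext w; by_cases h : w = v <;> simp [h, hv0]
  rw [this]; ring

theorem moebius_aux (U : Finset V) : ∀ g : Finset V → ℝ,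
    ∑ Z ∈ U.powerset, ∑ L ∈ Z.powerset, (-1 : ℝ) ^ ((Z \ L).card) * g L = g U := by
  induction U using Finset.induction_on with
  | empty => intro g; simp
  | insert v U hv ih =>
    intro g
    rw [Finset.sum_powerset_insert hv]
    have key : ∀ Z ∈ U.powerset, ∑ L ∈ (insert v Z).powerset,
        (-1 : ℝ) ^ ((insert v Z \ L).card) * g L =
        - (∑ L ∈ Z.powerset, (-1 : ℝ) ^ ((Z \ L).card) * g L) +
        ∑ L ∈ Z.powerset, (-1 : ℝ) ^ ((Z \ L).card) * g (insert v L) := by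
      intro Z hZ
      have hvZ : v ∉ Z := fun h => hv (Finset.mem_powerset.1 hZ h)
      rw [Finset.sum_powerset_insert hvZ, ← Finset.sum_neg_distrib]
      congr 1
      · refine Finset.sum_congr rfl fun L hL => ?_
        have hvL : v ∉ L := fun h => hvZ (Finset.mem_powerset.1 hL h)
        rw [Finset.insert_sdiff_of_notMem _ hvL, Finset.card_insert_of_notMem (by simp [hvZ])]
        ring
      · refine Finset.sum_congr rfl fun L hL => ?_
        have : insert v Z \ insert v L = Z \ L := by
          ext w; by_cases h : w = v <;> simp [h, hvZ]
        rw [this]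
    rw [Finset.sum_congr rfl key, Finset.sum_add_distrib, Finset.sum_neg_distrib, ih g,
      ih (fun L => g (insert v L))]
    ring

theorem avgOp_univ (f : (∀ v, 𝔛 v) → ℝ) (x : ∀ v, 𝔛 v) : avgOp f Finset.univ x = f x := by
  unfold avgOp
  have : Finset.univ.filter (fun j : ∀ v, 𝔛 v => ∀ v ∈ (Finset.univ : Finset V), j v = x v)
      = {x} := by
    ext j; simp [funext_iff]
  rw [this]; simp

theorem sum_lamOp (f : (∀ v, 𝔛 v) → ℝ) (x : ∀ v, 𝔛 v) : ∑ Z, lamOp f Z x = f x := by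
  have := moebius_aux (Finset.univ : Finset V) (fun L => avgOp f L x)
  rw [avgOp_univ, Finset.powerset_univ] at this
  exact this

theorem lamOp_dep (f : (∀ v, 𝔛 v) → ℝ) (Z : Finset V) : DepOn (lamOp f Z) Z := by
  intro x y h
  unfold lamOp
  refine Finset.sum_congr rfl fun L hL => ?_
  unfold avgOp
  congr 3
  ext j
  have hL := Finset.mem_powerset.1 hL
  simp only [Finset.mem_filter, Finset.mem_univ, true_and]
  exact forall₂_congr fun v hv => by rw [h v (hL hv)]

theorem lamOp_comb (f g h : (∀ v, 𝔛 v) → ℝ) (L : Finset V) (x : ∀ v, 𝔛 v) :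
    lamOp (fun j => f j + g j - h j) L x = lamOp f L x + lamOp g L x - lamOp h L x := by
  unfold lamOp avgOp
  simp only [Finset.sum_add_distrib, Finset.sum_sub_distrib, mul_add, mul_sub]

theorem margin_dep (p : (∀ v, 𝔛 v) → ℝ) (K : Finset V) : DepOn (margin p K) K := by
  intro x y h
  unfold margin
  congr 1
  ext j
  simp only [Finset.mem_filter, Finset.mem_univ, true_and]
  exact forall₂_congr fun v hv => by rw [h v hv]

theorem margin_pos (p : (∀ v, 𝔛 v) → ℝ) (hp : ∀ x, 0 < p x) (K : Finset V) (x : ∀ v, 𝔛 v) :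
    0 < margin p K x :=
  Finset.sum_pos (fun y _ => hp y) ⟨x, by simp⟩

theorem logMargin_dep (p : (∀ v, 𝔛 v) → ℝ) (K : Finset V) :
    DepOn (fun j => Real.log (margin p K j)) K :=
  fun x y h => by simp only [margin_dep p K x y h]

theorem card_fiber (M : Finset V) (y : ∀ v, 𝔛 v) :
    (Finset.univ.filter (fun j : ∀ v, 𝔛 v => ∀ v ∈ M, y v = j v)).card
      = ∏ v ∈ Mᶜ, Fintype.card (𝔛 v) := by
  have : Finset.univ.filter (fun j : ∀ v, 𝔛 v => ∀ v ∈ M, y v = j v)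
      = Fintype.piFinset (fun v => if v ∈ M then {y v} else Finset.univ) := by
    ext j
    simp only [Finset.mem_filter, Finset.mem_univ, true_and, Fintype.mem_piFinset]
    refine forall_congr' fun v => ?_
    by_cases h : v ∈ M <;> simp [h, eq_comm]
  rw [this, Fintype.card_piFinset, ← Finset.prod_mul_prod_compl M]
  rw [Finset.prod_eq_one (s := M) (fun v hv => by simp [hv]), one_mul]
  exact Finset.prod_congr rfl fun v hv => by simp [Finset.mem_compl.1 hv, Finset.card_univ]

theorem margin_collapse (p : (∀ v, 𝔛 v) → ℝ) (K M : Finset V) (hKM : K ⊆ M) (x : ∀ v, 𝔛 v) :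
    ∑ j ∈ Finset.univ.filter (fun j : ∀ v, 𝔛 v => ∀ v ∈ K, j v = x v), margin p M j
      = ((∏ v ∈ Mᶜ, Fintype.card (𝔛 v) : ℕ) : ℝ) * margin p K x := by
  unfold margin
  rw [Finset.sum_comm' (t' := Finset.univ.filter (fun j : ∀ v, 𝔛 v => ∀ v ∈ K, j v = x v))
    (s' := fun y => Finset.univ.filter (fun j : ∀ v, 𝔛 v => ∀ v ∈ M, y v = j v))]
  · simp only [Finset.sum_const, card_fiber, nsmul_eq_mul, Finset.mul_sum]
  · intro j y
    simp only [Finset.mem_filter, Finset.mem_univ, true_and]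
    constructor
    · rintro ⟨h1, h2⟩
      exact ⟨h2, fun v hv => (h2 v (hKM hv)).trans (h1 v hv)⟩
    · rintro ⟨h2, h1⟩
      exact ⟨fun v hv => (h2 v (hKM hv)).symm.trans (h1 v hv), h2⟩

theorem condIndep_of_factor (p : (∀ v, 𝔛 v) → ℝ) (A B C : Finset V)
    (hAB : Disjoint A B) (hAC : Disjoint A C)
    (a b : (∀ v, 𝔛 v) → ℝ) (ha : DepOn a (A ∪ C)) (hb : DepOn b (B ∪ C))
    (hq : ∀ x, margin p (A ∪ B ∪ C) x = a x * b x) : CondIndep p A B C := by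
  intro x
  have hN : ((∏ v ∈ (A ∪ B ∪ C)ᶜ, Fintype.card (𝔛 v) : ℕ) : ℝ) ≠ 0 := by
    exact_mod_cast Finset.prod_ne_zero_iff.2 fun v _ => Fintype.card_ne_zero
  have nA : ∀ v ∈ B, v ∉ A := fun v hv h => Finset.disjoint_left.1 hAB h hv
  have nC : ∀ v ∈ C, v ∉ A := fun v hv h => Finset.disjoint_left.1 hAC h hv
  have h0 := margin_collapse p (A ∪ B ∪ C) (A ∪ B ∪ C) subset_rfl x
  have h1 := margin_collapse p C (A ∪ B ∪ C) (by grind) x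
  have h2 := margin_collapse p (A ∪ C) (A ∪ B ∪ C) (by grind) x
  have h3 := margin_collapse p (B ∪ C) (A ∪ B ∪ C) (by grind) x
  refine mul_left_cancel₀ (mul_ne_zero hN hN) ?_
  rw [mul_mul_mul_comm _ _ (margin p (A ∪ B ∪ C) x),
    mul_mul_mul_comm _ _ (margin p (A ∪ C) x), ← h0, ← h1, ← h2, ← h3, Finset.sum_mul_sum,
    Finset.sum_mul_sum, ← Finset.sum_product', ← Finset.sum_product']
  refine Finset.sum_bij' (fun t _ => (A.piecewise t.1 t.2, A.piecewise t.2 t.1))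
    (fun t _ => (A.piecewise t.1 t.2, A.piecewise t.2 t.1)) ?_ ?_ ?_ ?_ ?_
  · rintro ⟨z, y⟩ h
    simp only [Finset.mem_product, Finset.mem_filter, Finset.mem_univ, true_and,
      Finset.mem_union, Finset.piecewise] at h ⊢
    grind
  · rintro ⟨z, y⟩ h
    simp only [Finset.mem_product, Finset.mem_filter, Finset.mem_univ, true_and,
      Finset.mem_union, Finset.piecewise] at h ⊢
    grind
  · rintro ⟨z, y⟩ h
    ext v <;> by_cases hv : v ∈ A <;> simp [hv]
  · rintro ⟨z, y⟩ h
    ext v <;> by_cases hv : v ∈ A <;> simp [hv]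
  · rintro ⟨z, y⟩ h
    simp only [Finset.mem_product, Finset.mem_filter, Finset.mem_univ, true_and,
      Finset.mem_union] at h
    simp only [hq]
    rw [ha (A.piecewise z y) z, hb (A.piecewise z y) y, ha (A.piecewise y z) y,
      hb (A.piecewise y z) z]
    · ring
    all_goals
      intro v hv
      simp only [Finset.mem_union] at hv
      simp only [Finset.piecewise]
      grind

theorem sc_of_condIndep (p : (∀ v, 𝔛 v) → ℝ) (hp : ∀ x, 0 < p x) (A B C L : Finset V)
    (hAB : Disjoint A B) (hAC : Disjoint A C) (hBC : Disjoint B C)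
    (h : CondIndep p A B C) (hL : L ⊆ B ∪ C) (hLB : (L ∩ B).Nonempty) :
    StrictlyCollapsible p (A ∪ B ∪ C) (B ∪ C) L := by
  have hlog : (fun j => Real.log (margin p (A ∪ B ∪ C) j)) = fun j =>
      Real.log (margin p (A ∪ C) j) + Real.log (margin p (B ∪ C) j)
        - Real.log (margin p C j) := by
    funext j
    have := congrArg Real.log (h j)
    rw [Real.log_mul (margin_pos p hp _ _).ne' (margin_pos p hp _ _).ne',
      Real.log_mul (margin_pos p hp _ _).ne' (margin_pos p hp _ _).ne'] at this
    linarith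
  obtain ⟨b, hb⟩ := hLB
  obtain ⟨hbL, hbB⟩ := Finset.mem_inter.1 hb
  have hbA : b ∉ A := fun h => Finset.disjoint_left.1 hAB h hbB
  have hbC : b ∉ C := fun h => Finset.disjoint_left.1 hBC hbB h
  have key : ∀ Z, b ∈ Z → ∀ x, mll p Z (A ∪ B ∪ C) x = mll p Z (B ∪ C) x := by
    intro Z hbZ x
    rw [mll_eq, mll_eq, hlog, lamOp_comb,
      lamOp_eq_zero _ (A ∪ C) Z (logMargin_dep p _) (fun hs => by have := hs hbZ; grind),
      lamOp_eq_zero _ C Z (logMargin_dep p _) (fun hs => hbC (hs hbZ))]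
    ring
  refine ⟨fun x => (key L hbL x).symm, fun Z hZ hLZ hne x => ?_⟩
  rw [key Z (hLZ.1 hbL) x, mll_eq]
  obtain ⟨a, ha⟩ := hne
  simp only [Finset.mem_inter, Finset.mem_sdiff] at ha
  exact lamOp_eq_zero _ (B ∪ C) Z (logMargin_dep p _) (fun hs => ha.2.2 (hs ha.1)) x

theorem condIndep_symm (p : (∀ v, 𝔛 v) → ℝ) (A B C : Finset V) (h : CondIndep p A B C) :
    CondIndep p B A C := by
  intro x
  rw [Finset.union_comm B A, h x, mul_comm]

theorem stmt11 (p : (∀ v, 𝔛 v) → ℝ) (hp : ∀ x, 0 < p x) (hsum : ∑ x, p x = 1)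
    (A B C M : Finset V) (hA : A.Nonempty) (hB : B.Nonempty) (hC : C.Nonempty)
    (hAB : Disjoint A B) (hAC : Disjoint A C) (hBC : Disjoint B C)
    (hM : M = A ∪ B ∪ C) :
    (((∀ B' ⊆ B, B'.Nonempty → StrictlyCollapsible p M (B ∪ C) B') ∧
      (∀ B' ⊆ B, B'.Nonempty → ∀ C' ⊆ C, C'.Nonempty →
        StrictlyCollapsible p M (B ∪ C) (B' ∪ C'))) ∧
     ((∀ A' ⊆ A, A'.Nonempty → StrictlyCollapsible p M (A ∪ C) A') ∧
      (∀ A' ⊆ A, A'.Nonempty → ∀ C' ⊆ C, C'.Nonempty →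
        StrictlyCollapsible p M (A ∪ C) (A' ∪ C')))) ↔
    CondIndep p A B C := by
  subst hM
  constructor
  · rintro ⟨⟨h1, -⟩, -⟩
    have hz : ∀ Z : Finset V, (Z ∩ A).Nonempty → (Z ∩ B).Nonempty → ∀ x,
        mll p Z (A ∪ B ∪ C) x = 0 := by
      intro Z hZA hZB x
      by_cases hZ : Z ⊆ A ∪ B ∪ C
      · obtain ⟨a, ha⟩ := hZA
        have ha' := Finset.mem_inter.1 ha
        have haB : a ∉ B := fun h => Finset.disjoint_left.1 hAB ha'.2 h
        have haC : a ∉ C := fun h => Finset.disjoint_left.1 hAC ha'.2 h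
        refine (h1 (Z ∩ B) Finset.inter_subset_right hZB).2 Z hZ
          ⟨Finset.inter_subset_left, fun h => ?_⟩ ⟨a, ?_⟩ x
        · exact haB (Finset.mem_inter.1 (h ha'.1)).2
        · simp [ha'.1, ha'.2, haB, haC]
      · exact lamOp_eq_zero _ _ Z (logMargin_dep p _) hZ x
    set f : (∀ v, 𝔛 v) → ℝ := fun j => Real.log (margin p (A ∪ B ∪ C) j) with hf
    have hz' : ∀ Z : Finset V, (Z ∩ A).Nonempty → (Z ∩ B).Nonempty → ∀ x, lamOp f Z x = 0 := hz
    have hout : ∀ Z : Finset V, ¬ Z ⊆ A ∪ B ∪ C → ∀ x, lamOp f Z x = 0 := fun Z hZ x =>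
      lamOp_eq_zero _ _ Z (logMargin_dep p _) hZ x
    refine condIndep_of_factor p A B C hAB hAC
      (fun x => Real.exp (∑ Z ∈ Finset.univ.filter (fun Z : Finset V => ¬ (Z ∩ B).Nonempty),
        lamOp f Z x))
      (fun x => Real.exp (∑ Z ∈ Finset.univ.filter (fun Z : Finset V => (Z ∩ B).Nonempty),
        lamOp f Z x)) ?_ ?_ ?_
    · intro x y hxy
      refine congrArg Real.exp (Finset.sum_congr rfl fun Z hZ => ?_)
      have hZ := (Finset.mem_filter.1 hZ).2
      by_cases hZM : Z ⊆ A ∪ B ∪ C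
      · refine lamOp_dep f Z x y fun v hv => hxy v ?_
        have h1 := hZM hv
        have h2 : v ∉ B := fun h => hZ ⟨v, Finset.mem_inter.2 ⟨hv, h⟩⟩
        simp only [Finset.mem_union] at h1 ⊢
        tauto
      · rw [hout Z hZM, hout Z hZM]
    · intro x y hxy
      refine congrArg Real.exp (Finset.sum_congr rfl fun Z hZ => ?_)
      have hZ := (Finset.mem_filter.1 hZ).2
      by_cases hZA : (Z ∩ A).Nonempty
      · rw [hz' Z hZA hZ, hz' Z hZA hZ]
      by_cases hZM : Z ⊆ A ∪ B ∪ C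
      · refine lamOp_dep f Z x y fun v hv => hxy v ?_
        have h1 := hZM hv
        have h2 : v ∉ A := fun h => hZA ⟨v, Finset.mem_inter.2 ⟨hv, h⟩⟩
        simp only [Finset.mem_union] at h1 ⊢
        tauto
      · rw [hout Z hZM, hout Z hZM]
    · intro x
      rw [← Real.exp_add, add_comm, Finset.sum_filter_add_sum_filter_not, sum_lamOp, hf]
      exact (Real.exp_log (margin_pos p hp _ x)).symm
  · intro h
    have h' := condIndep_symm p A B C h
    have e : A ∪ B ∪ C = B ∪ A ∪ C := by rw [Finset.union_comm A B]
    refine ⟨⟨fun B' hB' hne => ?_, fun B' hB' hne C' hC' _ => ?_⟩,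
      ⟨fun A' hA' hne => ?_, fun A' hA' hne C' hC' _ => ?_⟩⟩
    · refine sc_of_condIndep p hp A B C B' hAB hAC hBC h
        (hB'.trans Finset.subset_union_left) ?_
      rwa [Finset.inter_eq_left.2 hB']
    · refine sc_of_condIndep p hp A B C _ hAB hAC hBC h
        (Finset.union_subset_union hB' hC') ?_
      obtain ⟨v, hv⟩ := hne
      exact ⟨v, by simp [hv, hB' hv]⟩
    · rw [e]
      refine sc_of_condIndep p hp B A C A' hAB.symm hBC hAC h'
        (hA'.trans Finset.subset_union_left) ?_
      rwa [Finset.inter_eq_left.2 hA']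
    · rw [e]
      refine sc_of_condIndep p hp B A C _ hAB.symm hBC hAC h'
        (Finset.union_subset_union hA' hC') ?_
      obtain ⟨v, hv⟩ := hne
      exact ⟨v, by simp [hv, hA' hv]⟩
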